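/- arXiv:2602.08780 — 8 statements merged into one kernel-verified Lean document; each statement's English description precedes it below -/
import Mathlib

section
/- Fix a natural number N with 1 ≤ t ≤ N. If (α, β) satisfies the t-deletion orthogonality conditions, then (α, β) satisfies the (t−1)-deletion orthogonality conditions. -/
open Finset

theorem deletion_step_orthogonality
    (N t : ℕ) (ht1 : 1 ≤ t) (htN : t ≤ N)
    (α β : ℕ → ℂ) (hα : ∀ k : ℕ, N < k → α k = 0) (hβ : ∀ k : ℕ, N < k → β k = 0)
    (h : ∀ a' b' : ℕ, a' ≤ t → b' ≤ t →
      ∑ k ∈ Finset.range (N + 1), ((N - (t)).choose k : ℂ) / ((Real.sqrt ((N.choose (k + a') * N.choose (k + b') : ℕ)) : ℝ) : ℂ) * ((starRingEnd ℂ) (α (k + a')) * β (k + b')) = 0) :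
    ∀ a' b' : ℕ, a' ≤ t - 1 → b' ≤ t - 1 →
      ∑ k ∈ Finset.range (N + 1), ((N - (t - 1)).choose k : ℂ) / ((Real.sqrt ((N.choose (k + a') * N.choose (k + b') : ℕ)) : ℝ) : ℂ) * ((starRingEnd ℂ) (α (k + a')) * β (k + b')) = 0 := by
  intro a b ha hb
  have h1 := h a b (by omega) (by omega)
  have h2 := h (a + 1) (b + 1) (by omega) (by omega)
  have hM : N - (t - 1) = (N - t) + 1 := by omega
  have h0 : (N - t).choose N = 0 := Nat.choose_eq_zero_of_lt (by omega)
  rw [hM]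
  rw [Finset.sum_range_succ'] at h1 ⊢
  rw [Finset.sum_range_succ, h0] at h2
  have ea : ∀ k : ℕ, k + (a + 1) = k + 1 + a := by intros; omega
  have eb : ∀ k : ℕ, k + (b + 1) = k + 1 + b := by intros; omega
  simp only [ea, eb, Nat.cast_zero, zero_div, zero_mul, add_zero] at h2
  simp only [Nat.choose_succ_succ', Nat.cast_add, add_div, add_mul, Finset.sum_add_distrib,
    Nat.choose_zero_right] at h1 ⊢
  rw [h2, zero_add]
  exact h1
end

section
/- Fix a natural number N with 1 ≤ t ≤ N. If (α, β) satisfies the t-deletion non-deformation conditions, then (α, β) satisfies the (t−1)-deletion non-deformation conditions. -/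
open Finset

theorem deletion_step_nonDeformation
    (N t : ℕ) (ht1 : 1 ≤ t) (htN : t ≤ N)
    (α β : ℕ → ℂ) (hα : ∀ k : ℕ, N < k → α k = 0) (hβ : ∀ k : ℕ, N < k → β k = 0)
    (h : ∀ a' b' : ℕ, a' ≤ t → b' ≤ t →
      ∑ k ∈ Finset.range (N + 1), ((N - (t)).choose k : ℂ) / ((Real.sqrt ((N.choose (k + a') * N.choose (k + b') : ℕ)) : ℝ) : ℂ) * ((starRingEnd ℂ) (α (k + a')) * α (k + b') - (starRingEnd ℂ) (β (k + a')) * β (k + b')) = 0) :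
    ∀ a' b' : ℕ, a' ≤ t - 1 → b' ≤ t - 1 →
      ∑ k ∈ Finset.range (N + 1), ((N - (t - 1)).choose k : ℂ) / ((Real.sqrt ((N.choose (k + a') * N.choose (k + b') : ℕ)) : ℝ) : ℂ) * ((starRingEnd ℂ) (α (k + a')) * α (k + b') - (starRingEnd ℂ) (β (k + a')) * β (k + b')) = 0 := by
  intro a b ha hb
  have h1 := h a b (by omega) (by omega)
  have h2 := h (a + 1) (b + 1) (by omega) (by omega)
  have hM : N - (t - 1) = (N - t) + 1 := by omega
  have hz : (N - t).choose N = 0 := Nat.choose_eq_zero_of_lt (by omega)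
  rw [hM]
  rw [Finset.sum_range_succ'] at h1 ⊢
  rw [Finset.sum_range_succ, hz] at h2
  simp only [Nat.cast_zero, zero_div, zero_mul, add_zero] at h2
  have e := congrArg₂ (· + ·) h2 h1
  simp only [add_zero, ← add_assoc, ← Finset.sum_add_distrib] at e
  rw [← e]
  congr 1
  · apply Finset.sum_congr rfl
    intro k _
    rw [Nat.choose_succ_succ, add_right_comm k 1 a, add_right_comm k 1 b]
    push_cast
    ring
  · simp
end

section
/- Fix natural numbers N and t with t ≤ N. If (α, β) satisfies the t-deletion orthogonality conditions, then for every natural number m with m ≤ t, (α, β) satisfies the m-deletion orthogonality conditions. -/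
open Finset

lemma pascal_step (N n : ℕ) (hn : n < N) (g : ℕ → ℕ → ℂ) (a b : ℕ) :
    ∑ k ∈ Finset.range (N + 1), ((n + 1).choose k : ℂ) * g (k + a) (k + b)
      = ∑ k ∈ Finset.range (N + 1), (n.choose k : ℂ) * g (k + a) (k + b)
        + ∑ k ∈ Finset.range (N + 1), (n.choose k : ℂ) * g (k + (a + 1)) (k + (b + 1)) := by
  rw [Finset.sum_range_succ', Finset.sum_range_succ' (fun k => (n.choose k : ℂ) * g (k + a) (k + b)),
    Finset.sum_range_succ (fun k => (n.choose k : ℂ) * g (k + (a + 1)) (k + (b + 1))),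
    Nat.choose_eq_zero_of_lt hn]
  have e : ∀ k ∈ Finset.range N, ((n + 1).choose (k + 1) : ℂ) * g (k + 1 + a) (k + 1 + b)
      = (n.choose (k + 1) : ℂ) * g (k + 1 + a) (k + 1 + b)
        + (n.choose k : ℂ) * g (k + (a + 1)) (k + (b + 1)) := by
    intro k _
    rw [Nat.choose_succ_succ', show k + (a + 1) = k + 1 + a by ring,
      show k + (b + 1) = k + 1 + b by ring]
    push_cast
    ring
  rw [Finset.sum_congr rfl e, Finset.sum_add_distrib]
  simp only [Nat.choose_zero_right, Nat.cast_zero]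
  ring

lemma mono_aux (N t : ℕ) (htN : t ≤ N) (g : ℕ → ℕ → ℂ)
    (h : ∀ a b : ℕ, a ≤ t → b ≤ t →
      ∑ k ∈ Finset.range (N + 1), ((N - t).choose k : ℂ) * g (k + a) (k + b) = 0) :
    ∀ m : ℕ, m ≤ t → ∀ a b : ℕ, a ≤ m → b ≤ m →
      ∑ k ∈ Finset.range (N + 1), ((N - m).choose k : ℂ) * g (k + a) (k + b) = 0 := by
  intro m hm
  induction hm using Nat.decreasingInduction with
  | self => exact h
  | of_succ m hm ih =>
    intro a b ha hb
    rw [show N - m = (N - (m + 1)) + 1 by omega, pascal_step N _ (by omega),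
      ih a b (by omega) (by omega), ih (a + 1) (b + 1) (by omega) (by omega), add_zero]

theorem deletion_monotone_orthogonality
    (N t : ℕ) (htN : t ≤ N)
    (α β : ℕ → ℂ) (hα : ∀ k : ℕ, N < k → α k = 0) (hβ : ∀ k : ℕ, N < k → β k = 0)
    (h : ∀ a' b' : ℕ, a' ≤ t → b' ≤ t →
      ∑ k ∈ Finset.range (N + 1), ((N - (t)).choose k : ℂ) / ((Real.sqrt ((N.choose (k + a') * N.choose (k + b') : ℕ)) : ℝ) : ℂ) * ((starRingEnd ℂ) (α (k + a')) * β (k + b')) = 0) :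
    ∀ m : ℕ, m ≤ t →
    ∀ a' b' : ℕ, a' ≤ m → b' ≤ m →
      ∑ k ∈ Finset.range (N + 1), ((N - (m)).choose k : ℂ) / ((Real.sqrt ((N.choose (k + a') * N.choose (k + b') : ℕ)) : ℝ) : ℂ) * ((starRingEnd ℂ) (α (k + a')) * β (k + b')) = 0 := by
  have key := mono_aux N t htN (fun i j =>
    (((Real.sqrt ((N.choose i * N.choose j : ℕ)) : ℝ) : ℂ))⁻¹ * ((starRingEnd ℂ) (α i) * β j))
  simp only [← mul_assoc, ← div_eq_mul_inv] at key h ⊢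
  exact key h
end

section
/- Fix natural numbers N and t with t ≤ N. If (α, β) satisfies the t-deletion non-deformation conditions, then for every natural number m with m ≤ t, (α, β) satisfies the m-deletion non-deformation conditions. -/
open Finset

theorem pascal_sum_aux (N n : ℕ) (hn : n < N) (G : ℕ → ℂ) :
    ∑ k ∈ Finset.range (N + 1), ((n + 1).choose k : ℂ) * G k
      = ∑ k ∈ Finset.range (N + 1), (n.choose k : ℂ) * G k
        + ∑ k ∈ Finset.range (N + 1), (n.choose k : ℂ) * G (k + 1) := by
  rw [Finset.sum_range_succ' (fun k => ((n + 1).choose k : ℂ) * G k),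
    Finset.sum_range_succ' (fun k => (n.choose k : ℂ) * G k),
    Finset.sum_range_succ (fun k => (n.choose k : ℂ) * G (k + 1)),
    Nat.choose_eq_zero_of_lt hn]
  simp only [Nat.choose_succ_succ, Nat.cast_add, add_mul, Finset.sum_add_distrib,
    Nat.choose_zero_right]
  push_cast
  ring

theorem step_aux (N t : ℕ) (htN : t ≤ N) (F : ℕ → ℕ → ℂ)
    (h : ∀ a b : ℕ, a ≤ t → b ≤ t →
      ∑ k ∈ Finset.range (N + 1), ((N - t).choose k : ℂ) * F (k + a) (k + b) = 0) (d : ℕ) :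
    ∀ m : ℕ, m + d = t → ∀ a b : ℕ, a ≤ m → b ≤ m →
      ∑ k ∈ Finset.range (N + 1), ((N - m).choose k : ℂ) * F (k + a) (k + b) = 0 := by
  induction d with
  | zero =>
    intro m hm
    obtain rfl : m = t := by omega
    exact h
  | succ d ih =>
    intro m hm a b ha hb
    have e : N - m = (N - (m + 1)) + 1 := by omega
    have h1 := ih (m + 1) (by omega) a b (by omega) (by omega)
    have h2 := ih (m + 1) (by omega) (a + 1) (b + 1) (by omega) (by omega)
    rw [e, pascal_sum_aux N _ (by omega) (fun k => F (k + a) (k + b)), h1, zero_add, ← h2]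
    refine Finset.sum_congr rfl fun k _ => ?_
    simp only [add_assoc, add_comm 1]

theorem deletion_monotone_nonDeformation
    (N t : ℕ) (htN : t ≤ N)
    (α β : ℕ → ℂ) (hα : ∀ k : ℕ, N < k → α k = 0) (hβ : ∀ k : ℕ, N < k → β k = 0)
    (h : ∀ a' b' : ℕ, a' ≤ t → b' ≤ t →
      ∑ k ∈ Finset.range (N + 1), ((N - (t)).choose k : ℂ) / ((Real.sqrt ((N.choose (k + a') * N.choose (k + b') : ℕ)) : ℝ) : ℂ) * ((starRingEnd ℂ) (α (k + a')) * α (k + b') - (starRingEnd ℂ) (β (k + a')) * β (k + b')) = 0) :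
    ∀ m : ℕ, m ≤ t →
    ∀ a' b' : ℕ, a' ≤ m → b' ≤ m →
      ∑ k ∈ Finset.range (N + 1), ((N - (m)).choose k : ℂ) / ((Real.sqrt ((N.choose (k + a') * N.choose (k + b') : ℕ)) : ℝ) : ℂ) * ((starRingEnd ℂ) (α (k + a')) * α (k + b') - (starRingEnd ℂ) (β (k + a')) * β (k + b')) = 0 := by
  intro m hm a b ha hb
  have key := step_aux N t htN (fun i j =>
    (((Real.sqrt ((N.choose i * N.choose j : ℕ)) : ℝ) : ℂ))⁻¹ *
      ((starRingEnd ℂ) (α i) * α j - (starRingEnd ℂ) (β i) * β j))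
    (fun a b ha hb => by
      have := h a b ha hb
      simpa only [div_eq_mul_inv, mul_assoc] using this) (t - m) m (by omega) a b ha hb
  simpa only [div_eq_mul_inv, mul_assoc] using key
end

section
/- Fix natural numbers N and t with t ≤ N. Then (α, β) satisfies the t-insertion orthogonality conditions (C1) if and only if (α, β) satisfies the t-deletion orthogonality conditions. (This is the combinatorial core of the quantum insertion–deletion equivalence on permutation-invariant codes: the t-insertion conditions of Theorem 1 are equivalent to the t-deletion conditions of Aydin et al.) -/
open Finset

theorem pascal_aux (N n a b : ℕ) (α β : ℕ → ℂ) (hβ : ∀ k : ℕ, N < k → β k = 0) :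
    ∑ k ∈ Finset.range (N + 1), ((n + 1).choose k : ℂ) / ((Real.sqrt ((N.choose (k + a) * N.choose (k + b) : ℕ)) : ℝ) : ℂ) * ((starRingEnd ℂ) (α (k + a)) * β (k + b)) =
    ∑ k ∈ Finset.range (N + 1), (n.choose k : ℂ) / ((Real.sqrt ((N.choose (k + a) * N.choose (k + b) : ℕ)) : ℝ) : ℂ) * ((starRingEnd ℂ) (α (k + a)) * β (k + b)) +
    ∑ k ∈ Finset.range (N + 1), (n.choose k : ℂ) / ((Real.sqrt ((N.choose (k + (a + 1)) * N.choose (k + (b + 1)) : ℕ)) : ℝ) : ℂ) * ((starRingEnd ℂ) (α (k + (a + 1))) * β (k + (b + 1))) := by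
  rw [Finset.sum_range_succ', Finset.sum_range_succ' (fun k => (n.choose k : ℂ) / ((Real.sqrt ((N.choose (k + a) * N.choose (k + b) : ℕ)) : ℝ) : ℂ) * ((starRingEnd ℂ) (α (k + a)) * β (k + b))),
    Finset.sum_range_succ _ N, hβ (N + (b + 1)) (by omega), mul_zero, mul_zero, add_zero,
    add_right_comm, ← Finset.sum_add_distrib]
  simp only [Nat.choose_zero_right]
  congr 1
  refine Finset.sum_congr rfl fun k _ => ?_
  rw [Nat.choose_succ_succ', show k + (a + 1) = k + 1 + a by omega,
    show k + (b + 1) = k + 1 + b by omega, Nat.cast_add]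
  ring

theorem insertion_iff_deletion_orthogonality
    (N t : ℕ) (htN : t ≤ N)
    (α β : ℕ → ℂ) (hα : ∀ k : ℕ, N < k → α k = 0) (hβ : ∀ k : ℕ, N < k → β k = 0) :
    (∀ j a' b' : ℕ, j ≤ t → a' ≤ t - j → b' ≤ t - j →
      ∑ k ∈ Finset.range (N + 1), ((N - (t) + j).choose k : ℂ) / ((Real.sqrt ((N.choose (k + a') * N.choose (k + b') : ℕ)) : ℝ) : ℂ) * ((starRingEnd ℂ) (α (k + a')) * β (k + b')) = 0) ↔
    (∀ a' b' : ℕ, a' ≤ t → b' ≤ t →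
      ∑ k ∈ Finset.range (N + 1), ((N - (t)).choose k : ℂ) / ((Real.sqrt ((N.choose (k + a') * N.choose (k + b') : ℕ)) : ℝ) : ℂ) * ((starRingEnd ℂ) (α (k + a')) * β (k + b')) = 0) := by
  constructor
  · intro h a b ha hb
    exact h 0 a b (Nat.zero_le _) ha hb
  · intro h j
    induction j with
    | zero => intro a b _ ha hb; exact h a b ha hb
    | succ j ih =>
      intro a b hj ha hb
      rw [← add_assoc, pascal_aux N _ a b α β hβ, ih a b (by omega) (by omega) (by omega),
        ih (a + 1) (b + 1) (by omega) (by omega) (by omega), add_zero]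
end

section
/- Fix natural numbers N and t with t ≤ N. Then (α, β) satisfies the t-insertion non-deformation conditions (C2) if and only if (α, β) satisfies the t-deletion non-deformation conditions. (This is the combinatorial core of the quantum insertion–deletion equivalence on permutation-invariant codes: the t-insertion conditions of Theorem 1 are equivalent to the t-deletion conditions of Aydin et al.) -/
open Finset

theorem pascal_aux_s5 (N m a b : ℕ) (g : ℕ → ℕ → ℂ) (hg : ∀ x y, N < x → g x y = 0) :
    ∑ k ∈ Finset.range (N + 1), ((m + 1).choose k : ℂ) * g (k + a) (k + b) =
    ∑ k ∈ Finset.range (N + 1), (m.choose k : ℂ) * g (k + a) (k + b) +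
    ∑ k ∈ Finset.range (N + 1), (m.choose k : ℂ) * g (k + (a + 1)) (k + (b + 1)) := by
  rw [Finset.sum_range_succ', Finset.sum_range_succ' (fun k => (m.choose k : ℂ) * g (k + a) (k + b)),
    Finset.sum_range_succ (fun k => (m.choose k : ℂ) * g (k + (a + 1)) (k + (b + 1))),
    hg (N + (a + 1)) _ (by omega)]
  have h : ∀ k ∈ Finset.range N, ((m + 1).choose (k + 1) : ℂ) * g (k + 1 + a) (k + 1 + b) =
      (m.choose (k + 1) : ℂ) * g (k + 1 + a) (k + 1 + b) +
      (m.choose k : ℂ) * g (k + (a + 1)) (k + (b + 1)) := by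
    intro k _
    rw [Nat.choose_succ_succ', show k + (a + 1) = k + 1 + a by ring,
      show k + (b + 1) = k + 1 + b by ring]
    push_cast
    ring
  rw [Finset.sum_congr rfl h, Finset.sum_add_distrib]
  simp only [Nat.choose_zero_right]
  ring

theorem core_aux (N M t : ℕ) (g : ℕ → ℕ → ℂ) (hg : ∀ x y, N < x → g x y = 0)
    (h : ∀ a b : ℕ, a ≤ t → b ≤ t →
      ∑ k ∈ Finset.range (N + 1), (M.choose k : ℂ) * g (k + a) (k + b) = 0) (j : ℕ) :
    ∀ a b : ℕ, a + j ≤ t → b + j ≤ t →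
      ∑ k ∈ Finset.range (N + 1), ((M + j).choose k : ℂ) * g (k + a) (k + b) = 0 := by
  induction j with
  | zero => intro a b ha hb; exact h a b ha hb
  | succ j ih =>
    intro a b ha hb
    rw [← Nat.add_assoc, pascal_aux_s5 N (M + j) a b g hg, ih a b (by omega) (by omega),
      ih (a + 1) (b + 1) (by omega) (by omega), add_zero]

theorem insertion_iff_deletion_nonDeformation
    (N t : ℕ) (htN : t ≤ N)
    (α β : ℕ → ℂ) (hα : ∀ k : ℕ, N < k → α k = 0) (hβ : ∀ k : ℕ, N < k → β k = 0) :
    (∀ j a' b' : ℕ, j ≤ t → a' ≤ t - j → b' ≤ t - j →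
      ∑ k ∈ Finset.range (N + 1), ((N - (t) + j).choose k : ℂ) / ((Real.sqrt ((N.choose (k + a') * N.choose (k + b') : ℕ)) : ℝ) : ℂ) * ((starRingEnd ℂ) (α (k + a')) * α (k + b') - (starRingEnd ℂ) (β (k + a')) * β (k + b')) = 0) ↔
    (∀ a' b' : ℕ, a' ≤ t → b' ≤ t →
      ∑ k ∈ Finset.range (N + 1), ((N - (t)).choose k : ℂ) / ((Real.sqrt ((N.choose (k + a') * N.choose (k + b') : ℕ)) : ℝ) : ℂ) * ((starRingEnd ℂ) (α (k + a')) * α (k + b') - (starRingEnd ℂ) (β (k + a')) * β (k + b')) = 0) := by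
  constructor
  · intro h a b ha hb
    exact h 0 a b (Nat.zero_le _) ha hb
  · intro h j a b hj ha hb
    have key := core_aux N (N - t) t
      (fun x y => (((Real.sqrt ((N.choose x * N.choose y : ℕ)) : ℝ) : ℂ))⁻¹ *
        ((starRingEnd ℂ) (α x) * α y - (starRingEnd ℂ) (β x) * β y))
      (fun x y hx => by simp [hα x hx, hβ x hx])
      (fun a b ha hb => by
        rw [← h a b ha hb]
        exact Finset.sum_congr rfl fun k _ => by rw [div_eq_mul_inv, mul_assoc])
      j a b (by omega) (by omega)
    rw [← key]
    exact Finset.sum_congr rfl fun k _ => by rw [div_eq_mul_inv, mul_assoc]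
end

section
/- Fix natural numbers N, t, s with t + s ≤ N. Then (α, β) satisfies the (t, s) full-insdel non-deformation conditions (C6) if and only if (α, β) satisfies the (t, s) semi-insdel non-deformation conditions (C4). (Hence for permutation-invariant codes, the non-deformation conditions for t insertions followed by s deletions coincide with those for s deletions followed by t insertions.) -/
open Finset

theorem pascal_sum (N M : ℕ) (h : M < N) (f : ℕ → ℂ) :
    ∑ k ∈ Finset.range (N + 1), ((M + 1).choose k : ℂ) * f k =
      ∑ k ∈ Finset.range (N + 1), (M.choose k : ℂ) * f k +
      ∑ k ∈ Finset.range (N + 1), (M.choose k : ℂ) * f (k + 1) := by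
  rw [Finset.sum_range_succ', Finset.sum_range_succ' (fun k => (M.choose k : ℂ) * f k),
    Finset.sum_range_succ (fun k => (M.choose k : ℂ) * f (k + 1)), Nat.choose_eq_zero_of_lt h]
  simp only [Nat.choose_succ_succ, Nat.choose_zero_right, Nat.cast_add, add_mul,
    Finset.sum_add_distrib]
  push_cast
  ring

theorem climb (N M₀ : ℕ) (g : ℕ → ℕ → ℂ) (d : ℕ) (hd : M₀ + d ≤ N)
    (h : ∀ a b, a ≤ d → b ≤ d →
      ∑ k ∈ Finset.range (N + 1), (M₀.choose k : ℂ) * g (k + a) (k + b) = 0) (i : ℕ) :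
    ∀ a b, i ≤ d → a ≤ d - i → b ≤ d - i →
      ∑ k ∈ Finset.range (N + 1), ((M₀ + i).choose k : ℂ) * g (k + a) (k + b) = 0 := by
  induction i with
  | zero => intro a b _ ha hb; exact h a b ha hb
  | succ i ih =>
    intro a b hi ha hb
    rw [← add_assoc, pascal_sum N (M₀ + i) (by omega) (fun k => g (k + a) (k + b)),
      ih a b (by omega) (by omega) (by omega)]
    have := ih (a + 1) (b + 1) (by omega) (by omega) (by omega)
    rw [zero_add, ← this]
    refine Finset.sum_congr rfl fun k _ => ?_
    rw [show k + 1 + a = k + (a + 1) by ring, show k + 1 + b = k + (b + 1) by ring]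

theorem fullInsdel_iff_semiInsdel_nonDeformation
    (N t s : ℕ) (hts : t + s ≤ N)
    (α β : ℕ → ℂ) (hα : ∀ k : ℕ, N < k → α k = 0) (hβ : ∀ k : ℕ, N < k → β k = 0) :
    (∀ ℓ j a' b' : ℕ, ℓ ≤ min s t → j ≤ t - ℓ → a' ≤ t + s - 2 * ℓ - j → b' ≤ t + s - 2 * ℓ - j →
      ∑ k ∈ Finset.range (N + 1), ((N - t - s + 2 * ℓ + j).choose k : ℂ) / ((Real.sqrt ((N.choose (k + a') * N.choose (k + b') : ℕ)) : ℝ) : ℂ) * ((starRingEnd ℂ) (α (k + a')) * α (k + b') - (starRingEnd ℂ) (β (k + a')) * β (k + b')) = 0) ↔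
    (∀ j a' b' : ℕ, j ≤ t → a' ≤ t + s - j → b' ≤ t + s - j →
      ∑ k ∈ Finset.range (N + 1), ((N - t - s + j).choose k : ℂ) / ((Real.sqrt ((N.choose (k + a') * N.choose (k + b') : ℕ)) : ℝ) : ℂ) * ((starRingEnd ℂ) (α (k + a')) * α (k + b') - (starRingEnd ℂ) (β (k + a')) * β (k + b')) = 0) := by
  constructor
  · intro h j a b hj ha hb
    exact h 0 j a b (Nat.zero_le _) hj ha hb
  · intro h l j a b hl hj ha hb
    have hl1 : l ≤ s := hl.trans (min_le_left _ _)
    have hl2 : l ≤ t := hl.trans (min_le_right _ _)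
    have key := climb N (N - t - s) (fun x y =>
      (1 / ((Real.sqrt ((N.choose x * N.choose y : ℕ)) : ℝ) : ℂ)) *
        ((starRingEnd ℂ) (α x) * α y - (starRingEnd ℂ) (β x) * β y)) (t + s) (by omega)
      (fun a b ha hb => by
        rw [← h 0 a b (Nat.zero_le _) ha hb]
        refine Finset.sum_congr rfl fun k _ => ?_
        rw [add_zero]
        ring) (2 * l + j) a b (by omega) (by omega) (by omega)
    rw [← key]
    refine Finset.sum_congr rfl fun k _ => ?_
    rw [← add_assoc]
    ring
end

section
/- For all natural numbers m, n, k with k ≤ m + n, and for all x : Fin m → Bool and y : Fin n → Bool, the Vandermonde decomposition of Dicke functions holds: D_{m+n, k}(append(x, y)) = Σ_{a=0}^{k} √( (C(m, a) · C(n, k−a)) / C(m+n, k) ) · D_{m, a}(x) · D_{n, k−a}(y), where append(x, y) : Fin (m+n) → Bool is the concatenation of x and y. -/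
open Finset

/-- The Dicke function `D_{n,k}`: the amplitude of the Dicke state `|D^n_k⟩`
on the computational basis vector `x : Fin n → Bool`. -/
noncomputable def Dicke (n k : ℕ) (x : Fin n → Bool) : ℂ :=
  if (Finset.univ.filter fun i => x i = true).card = k then
    ((1 / Real.sqrt (n.choose k) : ℝ) : ℂ)
  else 0

theorem dicke_card_append (m n : ℕ) (x : Fin m → Bool) (y : Fin n → Bool) :
    (Finset.univ.filter fun i => Fin.append x y i = true).card =
      (Finset.univ.filter fun i => x i = true).card +
        (Finset.univ.filter fun i => y i = true).card := by
  simp only [Finset.card_filter, Fin.sum_univ_add, Fin.append_left, Fin.append_right]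

theorem dicke_vandermonde (m n k : ℕ) (hk : k ≤ m + n)
    (x : Fin m → Bool) (y : Fin n → Bool) :
    Dicke (m + n) k (Fin.append x y) =
      ∑ a ∈ Finset.range (k + 1),
        ((Real.sqrt ((m.choose a * n.choose (k - a) : ℝ) / ((m + n).choose k : ℝ)) : ℝ) : ℂ)
          * Dicke m a x * Dicke n (k - a) y := by
  have hp : (Finset.univ.filter fun i => x i = true).card ≤ m :=
    (Finset.card_le_univ _).trans (by simp)
  have hq : (Finset.univ.filter fun i => y i = true).card ≤ n :=
    (Finset.card_le_univ _).trans (by simp)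
  unfold Dicke
  rw [dicke_card_append]
  generalize (Finset.univ.filter fun i => x i = true).card = p at *
  generalize (Finset.univ.filter fun i => y i = true).card = q at *
  by_cases h : p + q = k
  · subst h
    rw [Finset.sum_eq_single p]
    · have hm : 0 < Real.sqrt (m.choose p : ℝ) :=
        Real.sqrt_pos.2 (by exact_mod_cast Nat.choose_pos hp)
      have hn : 0 < Real.sqrt (n.choose q : ℝ) :=
        Real.sqrt_pos.2 (by exact_mod_cast Nat.choose_pos hq)
      simp only [Nat.add_sub_cancel_left, if_true]
      rw [← Complex.ofReal_mul, ← Complex.ofReal_mul, Real.sqrt_div (by positivity),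
        Real.sqrt_mul (by positivity)]
      congr 1
      field_simp
    · intro b _ hb
      rw [if_neg (fun e => hb e.symm)]
      simp
    · intro hn
      exact absurd (Finset.mem_range.2 (by omega)) hn
  · rw [if_neg h]
    symm
    apply Finset.sum_eq_zero
    intro a ha
    have ha' := Finset.mem_range.1 ha
    by_cases h1 : p = a
    · rw [if_neg (show ¬ q = k - a by omega)]
      simp
    · rw [if_neg h1]
      simp
end
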